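/- Fundamental lemma of the coeffect logical relation: for all γ and Γ, (1) if γ·Γ ⊢ V : A then γ·Γ ⊨ V : A, and (2) if γ·Γ ⊢ M : B then γ·Γ ⊨ M : B. -/

import Mathlib

set_option autoImplicit false

/-- A preordered semiring of grades `(Q, +, 0, ·, 1, ≤co)`,
where `≤co` is a preorder respected by `+` and `·`. -/
structure CoSig (Q : Type) where
  add : Q → Q → Q
  zero : Q
  mul : Q → Q → Q
  one : Q
  le : Q → Q → Prop
  add_assoc : ∀ a b c, add (add a b) c = add a (add b c)
  add_comm : ∀ a b, add a b = add b a
  add_zero : ∀ a, add a zero = a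
  mul_assoc : ∀ a b c, mul (mul a b) c = mul a (mul b c)
  one_mul : ∀ a, mul one a = a
  mul_one : ∀ a, mul a one = a
  zero_mul : ∀ a, mul zero a = zero
  mul_zero : ∀ a, mul a zero = zero
  left_distrib : ∀ a b c, mul a (add b c) = add (mul a b) (mul a c)
  right_distrib : ∀ a b c, mul (add a b) c = add (mul a c) (mul b c)
  le_refl : ∀ a, le a a
  le_trans : ∀ a b c, le a b → le b c → le a c
  add_le_add : ∀ a b c d, le a b → le c d → le (add a c) (add b d)
  mul_le_mul : ∀ a b c d, le a b → le c d → le (mul a c) (mul b d)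

namespace CBPVCo

/-- Pointwise comparison of grade vectors: `γ₁ ≤co γ₂`. -/
def vle {Q : Type} (S : CoSig Q) (γ₁ γ₂ : List Q) : Prop := List.Forall₂ S.le γ₁ γ₂

/-- Pointwise addition of grade vectors. -/
def vadd {Q : Type} (S : CoSig Q) (γ₁ γ₂ : List Q) : List Q := List.zipWith S.add γ₁ γ₂

/-- Pointwise scaling of a grade vector: `q·γ`. -/
def vscale {Q : Type} (S : CoSig Q) (q : Q) (γ : List Q) : List Q := γ.map (S.mul q)

/-- `γ ≤co 0̄`: every entry of the grade vector is discardable. -/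
def leZero {Q : Type} (S : CoSig Q) (γ : List Q) : Prop := ∀ q ∈ γ, S.le q S.zero

mutual
/-- CBPV value types (coeffect version): `unit`, thunks `U B`, positive products. -/
inductive VTy (Q : Type) : Type where
  | unit : VTy Q
  | thunk : CTy Q → VTy Q
  | prod : VTy Q → VTy Q → VTy Q
/-- CBPV computation types (coeffect version): graded functions `A^q → B`,
graded returners `F_q A`, negative products. -/
inductive CTy (Q : Type) : Type where
  | arr : VTy Q → Q → CTy Q → CTy Q
  | F : Q → VTy Q → CTy Q
  | wth : CTy Q → CTy Q → CTy Q
end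

mutual
/-- CBPV values (de Bruijn indices for variables). -/
inductive Val (Q : Type) : Type where
  | var : Nat → Val Q
  | unit : Val Q
  | thunk : Comp Q → Val Q
  | pair : Val Q → Val Q → Val Q
/-- CBPV computations, with grade annotations on binders and on `return`. -/
inductive Comp (Q : Type) : Type where
  | lam : Q → Comp Q → Comp Q
  | app : Comp Q → Val Q → Comp Q
  | force : Val Q → Comp Q
  | split : Q → Val Q → Comp Q → Comp Q
  | cpair : Comp Q → Comp Q → Comp Q
  | fst : Comp Q → Comp Q
  | snd : Comp Q → Comp Q
  | ret : Q → Val Q → Comp Q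
  | letin : Q → Comp Q → Comp Q → Comp Q
end

mutual
/-- The value typing judgment `γ·Γ ⊢ V : A` of the CBPV type-and-coeffect system. -/
inductive VHasTy {Q : Type} (S : CoSig Q) : List Q → List (VTy Q) → Val Q → VTy Q → Prop where
  | var : ∀ {γ : List Q} {Γ : List (VTy Q)} {x : Nat} {q : Q} {A : VTy Q},
      γ.length = Γ.length → Γ[x]? = some A → γ[x]? = some q → S.le q S.one →
      (∀ (i : Nat) (q' : Q), i ≠ x → γ[i]? = some q' → S.le q' S.zero) →
      VHasTy S γ Γ (.var x) A
  | unit : ∀ {γ : List Q} {Γ : List (VTy Q)},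
      γ.length = Γ.length → leZero S γ → VHasTy S γ Γ .unit .unit
  | thunk : ∀ {γ : List Q} {Γ : List (VTy Q)} {M : Comp Q} {B : CTy Q},
      CHasTy S γ Γ M B → VHasTy S γ Γ (.thunk M) (.thunk B)
  | pair : ∀ {γ γ₁ γ₂ : List Q} {Γ : List (VTy Q)} {V₁ V₂ : Val Q} {A₁ A₂ : VTy Q},
      VHasTy S γ₁ Γ V₁ A₁ → VHasTy S γ₂ Γ V₂ A₂ → vle S γ (vadd S γ₁ γ₂) →
      VHasTy S γ Γ (.pair V₁ V₂) (.prod A₁ A₂)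

/-- The computation typing judgment `γ·Γ ⊢ M : B` of the CBPV type-and-coeffect system. -/
inductive CHasTy {Q : Type} (S : CoSig Q) : List Q → List (VTy Q) → Comp Q → CTy Q → Prop where
  | lam : ∀ {γ : List Q} {Γ : List (VTy Q)} {q : Q} {A : VTy Q} {M : Comp Q} {B : CTy Q},
      CHasTy S (q :: γ) (A :: Γ) M B → CHasTy S γ Γ (.lam q M) (.arr A q B)
  | app : ∀ {γ γ₁ γ₂ : List Q} {Γ : List (VTy Q)} {M : Comp Q} {V : Val Q}
      {A : VTy Q} {q : Q} {B : CTy Q},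
      CHasTy S γ₁ Γ M (.arr A q B) → VHasTy S γ₂ Γ V A →
      vle S γ (vadd S γ₁ (vscale S q γ₂)) → CHasTy S γ Γ (.app M V) B
  | force : ∀ {γ : List Q} {Γ : List (VTy Q)} {V : Val Q} {B : CTy Q},
      VHasTy S γ Γ V (.thunk B) → CHasTy S γ Γ (.force V) B
  | ret : ∀ {γ γ₁ : List Q} {Γ : List (VTy Q)} {q : Q} {V : Val Q} {A : VTy Q},
      VHasTy S γ₁ Γ V A → vle S γ (vscale S q γ₁) → CHasTy S γ Γ (.ret q V) (.F q A)
  | letin : ∀ {γ γ₁ γ₂ : List Q} {Γ : List (VTy Q)} {q₁ q₂ : Q} {M N : Comp Q}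
      {A : VTy Q} {B : CTy Q},
      CHasTy S γ₁ Γ M (.F q₁ A) → CHasTy S (S.mul q₁ q₂ :: γ₂) (A :: Γ) N B →
      vle S γ (vadd S (vscale S q₂ γ₁) γ₂) → CHasTy S γ Γ (.letin q₂ M N) B
  | split : ∀ {γ γ₁ γ₂ : List Q} {Γ : List (VTy Q)} {q : Q} {V : Val Q}
      {A₁ A₂ : VTy Q} {N : Comp Q} {B : CTy Q},
      VHasTy S γ₁ Γ V (.prod A₁ A₂) → CHasTy S (q :: q :: γ₂) (A₂ :: A₁ :: Γ) N B →
      vle S γ (vadd S (vscale S q γ₁) γ₂) → CHasTy S γ Γ (.split q V N) B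
  | cpair : ∀ {γ : List Q} {Γ : List (VTy Q)} {M₁ M₂ : Comp Q} {B₁ B₂ : CTy Q},
      CHasTy S γ Γ M₁ B₁ → CHasTy S γ Γ M₂ B₂ → CHasTy S γ Γ (.cpair M₁ M₂) (.wth B₁ B₂)
  | fst : ∀ {γ : List Q} {Γ : List (VTy Q)} {M : Comp Q} {B₁ B₂ : CTy Q},
      CHasTy S γ Γ M (.wth B₁ B₂) → CHasTy S γ Γ (.fst M) B₁
  | snd : ∀ {γ : List Q} {Γ : List (VTy Q)} {M : Comp Q} {B₁ B₂ : CTy Q},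
      CHasTy S γ Γ M (.wth B₁ B₂) → CHasTy S γ Γ (.snd M) B₂
end

/-- Closed values: closures (capturing a grade vector and an environment),
unit, and pairs of closed values. -/
inductive CloVal (Q : Type) : Type where
  | clo : List Q → List (CloVal Q) → Comp Q → CloVal Q
  | unit : CloVal Q
  | pair : CloVal Q → CloVal Q → CloVal Q

/-- Closed terminal computations. -/
inductive Terminal (Q : Type) : Type where
  | ret : Q → CloVal Q → Terminal Q
  | lamClo : List Q → List (CloVal Q) → Q → Comp Q → Terminal Q
  | cpairClo : List Q → List (CloVal Q) → Comp Q → Comp Q → Terminal Q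

/-- The coeffect-instrumented value judgment `γ·ρ ⊢ V ⇓ W`. -/
inductive EvalVal {Q : Type} (S : CoSig Q) :
    List Q → List (CloVal Q) → Val Q → CloVal Q → Prop where
  | var : ∀ {γ : List Q} {ρ : List (CloVal Q)} {x : Nat} {q : Q} {W : CloVal Q},
      γ.length = ρ.length → ρ[x]? = some W → γ[x]? = some q → S.le q S.one →
      (∀ (i : Nat) (q' : Q), i ≠ x → γ[i]? = some q' → S.le q' S.zero) →
      EvalVal S γ ρ (.var x) W
  | unit : ∀ {γ : List Q} {ρ : List (CloVal Q)},
      γ.length = ρ.length → leZero S γ → EvalVal S γ ρ .unit .unit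
  | thunk : ∀ {γ γ' : List Q} {ρ : List (CloVal Q)} {M : Comp Q},
      vle S γ γ' → EvalVal S γ ρ (.thunk M) (.clo γ' ρ M)
  | pair : ∀ {γ γ₁ γ₂ : List Q} {ρ : List (CloVal Q)} {V₁ V₂ : Val Q} {W₁ W₂ : CloVal Q},
      EvalVal S γ₁ ρ V₁ W₁ → EvalVal S γ₂ ρ V₂ W₂ → vle S γ (vadd S γ₁ γ₂) →
      EvalVal S γ ρ (.pair V₁ V₂) (.pair W₁ W₂)

/-- The coeffect-instrumented big-step judgment `γ·ρ ⊢ M ⇓ T`. -/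
inductive EvalComp {Q : Type} (S : CoSig Q) :
    List Q → List (CloVal Q) → Comp Q → Terminal Q → Prop where
  | lam : ∀ {γ γ' : List Q} {ρ : List (CloVal Q)} {q : Q} {M : Comp Q},
      vle S γ γ' → EvalComp S γ ρ (.lam q M) (.lamClo γ' ρ q M)
  | cpair : ∀ {γ γ' : List Q} {ρ : List (CloVal Q)} {M₁ M₂ : Comp Q},
      vle S γ γ' → EvalComp S γ ρ (.cpair M₁ M₂) (.cpairClo γ' ρ M₁ M₂)
  | ret : ∀ {γ γ₁ : List Q} {ρ : List (CloVal Q)} {q : Q} {V : Val Q} {W : CloVal Q},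
      EvalVal S γ₁ ρ V W → vle S γ (vscale S q γ₁) →
      EvalComp S γ ρ (.ret q V) (.ret q W)
  | app : ∀ {γ γ₁ γ₂ γ' : List Q} {ρ ρ' : List (CloVal Q)} {M M' : Comp Q}
      {V : Val Q} {W : CloVal Q} {q : Q} {T : Terminal Q},
      EvalComp S γ₁ ρ M (.lamClo γ' ρ' q M') → EvalVal S γ₂ ρ V W →
      EvalComp S (q :: γ') (W :: ρ') M' T → vle S γ (vadd S γ₁ (vscale S q γ₂)) →
      EvalComp S γ ρ (.app M V) T
  | force : ∀ {γ γ' : List Q} {ρ ρ' : List (CloVal Q)} {V : Val Q} {M : Comp Q} {T : Terminal Q},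
      EvalVal S γ ρ V (.clo γ' ρ' M) → EvalComp S γ' ρ' M T → EvalComp S γ ρ (.force V) T
  | letin : ∀ {γ γ₁ γ₂ : List Q} {ρ : List (CloVal Q)} {q₁ q₂ : Q} {M N : Comp Q}
      {W : CloVal Q} {T : Terminal Q},
      EvalComp S γ₁ ρ M (.ret q₁ W) → EvalComp S (S.mul q₁ q₂ :: γ₂) (W :: ρ) N T →
      vle S γ (vadd S (vscale S q₂ γ₁) γ₂) → EvalComp S γ ρ (.letin q₂ M N) T
  | split : ∀ {γ γ₁ γ₂ : List Q} {ρ : List (CloVal Q)} {q : Q} {V : Val Q}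
      {W₁ W₂ : CloVal Q} {N : Comp Q} {T : Terminal Q},
      EvalVal S γ₁ ρ V (.pair W₁ W₂) → EvalComp S (q :: q :: γ₂) (W₂ :: W₁ :: ρ) N T →
      vle S γ (vadd S (vscale S q γ₁) γ₂) → EvalComp S γ ρ (.split q V N) T
  | fst : ∀ {γ γ' : List Q} {ρ ρ' : List (CloVal Q)} {M M₁ M₂ : Comp Q} {T : Terminal Q},
      EvalComp S γ ρ M (.cpairClo γ' ρ' M₁ M₂) → EvalComp S γ' ρ' M₁ T →
      EvalComp S γ ρ (.fst M) T
  | snd : ∀ {γ γ' : List Q} {ρ ρ' : List (CloVal Q)} {M M₁ M₂ : Comp Q} {T : Terminal Q},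
      EvalComp S γ ρ M (.cpairClo γ' ρ' M₁ M₂) → EvalComp S γ' ρ' M₂ T →
      EvalComp S γ ρ (.snd M) T

mutual
/-- The logical relation on closed values: `W ∈ 𝒲⟦A⟧`. -/
def WRel {Q : Type} (S : CoSig Q) : VTy Q → CloVal Q → Prop
  | .unit, W => W = CloVal.unit
  | .thunk B, W => ∃ (γ : List Q) (ρ : List (CloVal Q)) (M : Comp Q),
      W = CloVal.clo γ ρ M ∧ ∃ (T : Terminal Q), EvalComp S γ ρ M T ∧ TRel S B T
  | .prod A₁ A₂, W => ∃ (W₁ W₂ : CloVal Q), W = CloVal.pair W₁ W₂ ∧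
      WRel S A₁ W₁ ∧ WRel S A₂ W₂

/-- The logical relation on closed terminals: `T ∈ 𝒯⟦B⟧`. -/
def TRel {Q : Type} (S : CoSig Q) : CTy Q → Terminal Q → Prop
  | .F q A, T => ∃ (W : CloVal Q), T = Terminal.ret q W ∧ WRel S A W
  | .arr A q B, T => ∃ (γ : List Q) (ρ : List (CloVal Q)) (M : Comp Q),
      T = Terminal.lamClo γ ρ q M ∧
      ∀ (W : CloVal Q), WRel S A W →
        ∃ (T' : Terminal Q), EvalComp S (q :: γ) (W :: ρ) M T' ∧ TRel S B T'
  | .wth B₁ B₂, T => ∃ (γ : List Q) (ρ : List (CloVal Q)) (M₁ M₂ : Comp Q),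
      T = Terminal.cpairClo γ ρ M₁ M₂ ∧
      (∃ (T' : Terminal Q), EvalComp S γ ρ M₁ T' ∧ TRel S B₁ T') ∧
      (∃ (T' : Terminal Q), EvalComp S γ ρ M₂ T' ∧ TRel S B₂ T')
end

/-- The logical relation on computations with graded environments: `(γ·ρ, M) ∈ ℳ⟦B⟧`. -/
def MRel {Q : Type} (S : CoSig Q) (B : CTy Q) (γ : List Q) (ρ : List (CloVal Q))
    (M : Comp Q) : Prop :=
  ∃ (T : Terminal Q), EvalComp S γ ρ M T ∧ TRel S B T

/-- The logical relation on values with graded environments: `(γ·ρ, V) ∈ 𝒱⟦A⟧`. -/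
def VRel {Q : Type} (S : CoSig Q) (A : VTy Q) (γ : List Q) (ρ : List (CloVal Q))
    (V : Val Q) : Prop :=
  ∃ (W : CloVal Q), EvalVal S γ ρ V W ∧ WRel S A W

/-- Semantic typing of environments: `Γ ⊨ ρ` — the environment maps every
variable in the domain of `Γ` to a closed value of the expected type. -/
def EnvOk {Q : Type} (S : CoSig Q) (Γ : List (VTy Q)) (ρ : List (CloVal Q)) : Prop :=
  Γ.length = ρ.length ∧
  ∀ (x : Nat) (A : VTy Q), Γ[x]? = some A →
    ∃ (W : CloVal Q), ρ[x]? = some W ∧ WRel S A W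

/-- Semantic typing of values: `γ·Γ ⊨ V : A`. -/
def VSem {Q : Type} (S : CoSig Q) (γ : List Q) (Γ : List (VTy Q)) (V : Val Q)
    (A : VTy Q) : Prop :=
  ∀ (ρ : List (CloVal Q)), EnvOk S Γ ρ → VRel S A γ ρ V

/-- Semantic typing of computations: `γ·Γ ⊨ M : B`. -/
def CSem {Q : Type} (S : CoSig Q) (γ : List Q) (Γ : List (VTy Q)) (M : Comp Q)
    (B : CTy Q) : Prop :=
  ∀ (ρ : List (CloVal Q)), EnvOk S Γ ρ → MRel S B γ ρ M

theorem vle_rfl {Q : Type} (S : CoSig Q) (γ : List Q) : vle S γ γ := by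
  induction γ with
  | nil => exact List.Forall₂.nil
  | cons a l ih => exact List.Forall₂.cons (S.le_refl a) ih

theorem EnvOk.cons {Q : Type} {S : CoSig Q} {Γ : List (VTy Q)} {ρ : List (CloVal Q)}
    {A : VTy Q} {W : CloVal Q} (h : EnvOk S Γ ρ) (hW : WRel S A W) :
    EnvOk S (A :: Γ) (W :: ρ) := by
  refine ⟨by simp [h.1], ?_⟩
  intro x A' hx
  cases x with
  | zero =>
    simp only [List.getElem?_cons_zero, Option.some.injEq] at hx
    subst hx
    exact ⟨W, by simp, hW⟩
  | succ n =>
    simp only [List.getElem?_cons_succ] at hx ⊢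
    exact h.2 n A' hx

mutual
theorem vfund {Q : Type} (S : CoSig Q) {γ : List Q} {Γ : List (VTy Q)} {V : Val Q} {A : VTy Q}
    (h : VHasTy S γ Γ V A) : VSem S γ Γ V A := by
  intro ρ hρ
  cases h with
  | var hl hA hq h1 h0 =>
    obtain ⟨W, hW, hR⟩ := hρ.2 _ _ hA
    exact ⟨W, .var (hl.trans hρ.1) hW hq h1 h0, hR⟩
  | unit hl h0 => exact ⟨.unit, .unit (hl.trans hρ.1) h0, by simp only [WRel]⟩
  | thunk hM =>
    refine ⟨_, .thunk (vle_rfl S _), ?_⟩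
    simp only [WRel]
    exact ⟨_, _, _, rfl, cfund S hM ρ hρ⟩
  | pair h1 h2 hle =>
    obtain ⟨W1, e1, r1⟩ := vfund S h1 ρ hρ
    obtain ⟨W2, e2, r2⟩ := vfund S h2 ρ hρ
    refine ⟨_, .pair e1 e2 hle, ?_⟩
    simp only [WRel]
    exact ⟨_, _, rfl, r1, r2⟩

theorem cfund {Q : Type} (S : CoSig Q) {γ : List Q} {Γ : List (VTy Q)} {M : Comp Q} {B : CTy Q}
    (h : CHasTy S γ Γ M B) : CSem S γ Γ M B := by
  intro ρ hρ
  cases h with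
  | lam hM =>
    refine ⟨_, .lam (vle_rfl S _), ?_⟩
    simp only [TRel]
    exact ⟨_, _, _, rfl, fun W hW => cfund S hM _ (hρ.cons hW)⟩
  | app hM hV hle =>
    obtain ⟨T, e, r⟩ := cfund S hM ρ hρ
    obtain ⟨W, eW, rW⟩ := vfund S hV ρ hρ
    simp only [TRel] at r
    obtain ⟨γ', ρ', M', rfl, hf⟩ := r
    obtain ⟨T', e', r'⟩ := hf W rW
    exact ⟨T', .app e eW e' hle, r'⟩
  | force hV =>
    obtain ⟨W, eW, rW⟩ := vfund S hV ρ hρ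
    simp only [WRel] at rW
    obtain ⟨γ', ρ', M', rfl, T, e, r⟩ := rW
    exact ⟨T, .force eW e, r⟩
  | ret hV hle =>
    obtain ⟨W, eW, rW⟩ := vfund S hV ρ hρ
    refine ⟨_, .ret eW hle, ?_⟩
    simp only [TRel]
    exact ⟨_, rfl, rW⟩
  | letin hM hN hle =>
    obtain ⟨T, e, r⟩ := cfund S hM ρ hρ
    simp only [TRel] at r
    obtain ⟨W, rfl, rW⟩ := r
    obtain ⟨T', e', r'⟩ := cfund S hN _ (hρ.cons rW)
    exact ⟨T', .letin e e' hle, r'⟩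
  | split hV hN hle =>
    obtain ⟨W, eW, rW⟩ := vfund S hV ρ hρ
    simp only [WRel] at rW
    obtain ⟨W1, W2, rfl, r1, r2⟩ := rW
    obtain ⟨T', e', r'⟩ := cfund S hN _ ((hρ.cons r1).cons r2)
    exact ⟨T', .split eW e' hle, r'⟩
  | cpair h1 h2 =>
    refine ⟨_, .cpair (vle_rfl S _), ?_⟩
    simp only [TRel]
    exact ⟨_, _, _, _, rfl, cfund S h1 ρ hρ, cfund S h2 ρ hρ⟩
  | fst hM =>
    obtain ⟨T, e, r⟩ := cfund S hM ρ hρ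
    simp only [TRel] at r
    obtain ⟨γ', ρ', M1, M2, rfl, ⟨T', e', r'⟩, _⟩ := r
    exact ⟨T', .fst e e', r'⟩
  | snd hM =>
    obtain ⟨T, e, r⟩ := cfund S hM ρ hρ
    simp only [TRel] at r
    obtain ⟨γ', ρ', M1, M2, rfl, _, ⟨T', e', r'⟩⟩ := r
    exact ⟨T', .snd e e', r'⟩
end

/-- Fundamental lemma of the coeffect logical relation: syntactic type-and-coeffect
typing implies semantic typing, for values and for computations. -/
theorem fundamental_lemma {Q : Type} (S : CoSig Q) :
    (∀ {γ : List Q} {Γ : List (VTy Q)} {V : Val Q} {A : VTy Q},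
      VHasTy S γ Γ V A → VSem S γ Γ V A) ∧
    (∀ {γ : List Q} {Γ : List (VTy Q)} {M : Comp Q} {B : CTy Q},
      CHasTy S γ Γ M B → CSem S γ Γ M B) := by
  exact ⟨fun h => vfund S h, fun h => cfund S h⟩

end CBPVCo
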